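/- arXiv:0911.5086 — 2 statements merged into one kernel-verified Lean document; each statement's English description precedes it below -/
import Mathlib

section
/- Let d ≥ 2 and m ≥ 2, let Π_1, …, Π_m be parallel hyperplanes in E^{d+1} with Π_j above Π_i for j > i, let P_i ⊂ Π_i be finite with each 𝒫_i = conv(P_i) d-dimensional, P = P_1 ∪ … ∪ P_m, 𝒫 = conv(P), 𝒫_1 = 𝒫 ∩ Π_1 and 𝒫_m = 𝒫 ∩ Π_m. Assume that every nonempty proper exposed face of 𝒫 contained neither in Π_1 nor in Π_m is a simplex, and that 𝒫_1 and 𝒫_m are simplicial d-polytopes. Let y be a point beyond the facet 𝒫_1 and beneath every other facet of 𝒫, and z a point beyond the facet 𝒫_m and beneath every other facet of 𝒫. Then Q = conv(P ∪ {y, z}) is a simplicial (d+1)-polytope, i.e., every nonempty proper exposed face of Q is a simplex. (Claim in the proof of Lemma 2.5.) -/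
open Set Pointwise RealInnerProductSpace

/-- The dimension of the affine hull of a set. -/
noncomputable def adim {N : ℕ} (F : Set (EuclideanSpace ℝ (Fin N))) : ℕ :=
  Module.finrank ℝ (vectorSpan ℝ F)

/-- A compact convex set is a simplex if its extreme points (vertices) are affinely
independent. -/
def IsSimplexSet {N : ℕ} (F : Set (EuclideanSpace ℝ (Fin N))) : Prop :=
  AffineIndependent ℝ ((↑) : (F.extremePoints ℝ) → EuclideanSpace ℝ (Fin N))

/-- `F` is a facet of `C`: an exposed face of dimension one less than `C`. -/
def IsFacetOf {N : ℕ} (C F : Set (EuclideanSpace ℝ (Fin N))) : Prop :=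
  IsExposed ℝ C F ∧ F.Nonempty ∧ adim F + 1 = adim C

/-- `p` is beyond the facet `F` of `C`. -/
def IsBeyond {N : ℕ} (C F : Set (EuclideanSpace ℝ (Fin N)))
    (p : EuclideanSpace ℝ (Fin N)) : Prop :=
  ∀ x ∈ C, x ∉ (affineSpan ℝ F : Set (EuclideanSpace ℝ (Fin N))) →
    (affineSpan ℝ F).SOppSide p x

/-- `p` is beneath the facet `F` of `C`. -/
def IsBeneath {N : ℕ} (C F : Set (EuclideanSpace ℝ (Fin N)))
    (p : EuclideanSpace ℝ (Fin N)) : Prop :=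
  ∀ x ∈ C, x ∉ (affineSpan ℝ F : Set (EuclideanSpace ℝ (Fin N))) →
    (affineSpan ℝ F).SSameSide p x

/-! Let `{l = c}` support `Q` along a proper face `F` and put `G = K ∩ {l = c}`, where `K = conv V`
has the disjoint facets `A` and `B`, beyond which `y` and `z` lie. The vertices of `F` are among
those of `G` and the points of `{y, z}` on `{l = c}`.

Since `y` is beyond `A` and `l y ≤ c`, the face `G` is not `A`, and likewise it is not `B`; so `G`
is a simplex. If `l y = c`, then `G ⊆ A`: for `x ∈ G`, the normalisation of `l` is a point of the
polar body of `K` on the face of functionals with maximum at `x`. Maximising the value at `y` over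
the extreme points of that face gives a facet of `K` through `x` which `y` is not beneath, and `A`
is the only such facet. So `F` is `G`, a pyramid over `G` with apex `y ∉ aff A` or `z ∉ aff B`, or,
when it contains both points, the segment `[y, z]`, because then `G ⊆ A ∩ B = ∅`. -/

section Affine

variable {k W P : Type*} [DivisionRing k] [AddCommGroup W] [Module k W] [AddTorsor W P]

lemma affineIndependent_insert {s : Set P} {p : P}
    (hs : AffineIndependent k ((↑) : s → P)) (hp : p ∉ affineSpan k s) :
    AffineIndependent k ((↑) : ↥(insert p s) → P) := by
  have mem_of_ne (x : ↥(insert p s)) (hx : x ≠ ⟨p, mem_insert p s⟩) : (x : P) ∈ s :=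
    x.2.resolve_left fun h => hx (Subtype.ext h)
  refine AffineIndependent.affineIndependent_of_notMem_span (i := ⟨p, mem_insert p s⟩) ?_ ?_
  · let e : {x : ↥(insert p s) // x ≠ ⟨p, mem_insert p s⟩} ↪ s :=
      ⟨fun x => ⟨x.1, mem_of_ne x.1 x.2⟩, fun x x' h =>
        Subtype.ext (Subtype.ext (Subtype.mk.inj h))⟩
    exact hs.comp_embedding e
  · refine fun h => hp (affineSpan_mono k ?_ h)
    rintro _ ⟨x, hx, rfl⟩
    exact mem_of_ne x hx

lemma affineIndependent_pair {p q : P} (h : p ≠ q) :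
    AffineIndependent k ((↑) : ↥({p, q} : Set P) → P) :=
  affineIndependent_insert (affineIndependent_of_subsingleton k _)
    (by rwa [AffineSubspace.mem_affineSpan_singleton])

end Affine

section Functionals

variable {E : Type*} [NormedAddCommGroup E] [NormedSpace ℝ E] {l : E →L[ℝ] ℝ} {c : ℝ}

lemma map_eq_of_mem_affineSpan {s : Set E} (hs : ∀ x ∈ s, l x = c) {x : E}
    (hx : x ∈ affineSpan ℝ s) : l x = c :=
  AffineMap.eqOn_affineSpan (f := l.toLinearMap.toAffineMap) (g := AffineMap.const ℝ E c) hs hx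

lemma map_pos_of_sameRay {v w : E} (h : SameRay ℝ v w) (hv : v ≠ 0) (hw : 0 < l w) : 0 < l v := by
  obtain ⟨r, s, hr, hs, h⟩ := h.exists_pos hv (by rintro rfl; simp at hw)
  have hlv : r * l v = s * l w := by simpa using congrArg l h
  exact pos_of_mul_pos_right (hlv ▸ mul_pos hs hw) hr.le

lemma map_lt_of_sSameSide {S : AffineSubspace ℝ E} (hS : ∀ p ∈ S, l p = c) {x y : E}
    (hxy : S.SSameSide y x) (hx : l x < c) : l y < c := by
  obtain ⟨⟨p, hp, q, hq, hray⟩, hy, -⟩ := hxy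
  have hpos := map_pos_of_sameRay (l := -l) hray
    (vsub_ne_zero.2 (ne_of_mem_of_not_mem hp hy).symm) (by simpa [hS q hq] using hx)
  simpa [hS p hp] using hpos

lemma lt_map_of_sOppSide {S : AffineSubspace ℝ E} (hS : ∀ p ∈ S, l p = c) {x y : E}
    (hxy : S.SOppSide y x) (hx : l x < c) : c < l y := by
  obtain ⟨⟨p, hp, q, hq, hray⟩, hy, -⟩ := hxy
  have hpos := map_pos_of_sameRay (l := l) hray
    (vsub_ne_zero.2 (ne_of_mem_of_not_mem hp hy).symm) (by simpa [hS q hq] using hx)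
  simpa [hS p hp] using hpos

lemma forall_mem_convexHull_le {V : Set E} (hV : ∀ v ∈ V, l v ≤ c) :
    ∀ x ∈ convexHull ℝ V, l x ≤ c :=
  convexHull_min (t := {x | l x ≤ c}) hV (convex_halfSpace_le l.isLinear c)

lemma map_lt_of_mem_interior {K : Set E} (hl : l ≠ 0) (hK : ∀ x ∈ K, l x ≤ c) {q : E}
    (hq : q ∈ interior K) : l q < c := by
  have hsub : l '' interior K ⊆ interior (Iic c) :=
    interior_maximal (image_subset_iff.2 fun x hx => hK x (interior_subset hx))
      (l.isOpenMap_of_ne_zero hl _ isOpen_interior)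
  simpa using hsub (mem_image_of_mem l hq)

lemma isExposed_sep_map_eq {K : Set E} (hK : ∀ x ∈ K, l x ≤ c) :
    IsExposed ℝ K {x ∈ K | l x = c} := by
  rintro ⟨p, hp, rfl⟩
  refine ⟨l, ?_⟩
  ext x
  exact and_congr_right fun hx =>
    ⟨fun h => by rwa [h], fun h => (hK x hx).antisymm (h p hp)⟩

lemma exists_supporting_functional {K F : Set E} (hF : IsExposed ℝ K F) (hne : F.Nonempty) :
    ∃ (l : E →L[ℝ] ℝ) (c : ℝ), (∀ x ∈ K, l x ≤ c) ∧ F = {x ∈ K | l x = c} := by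
  obtain ⟨l, rfl⟩ := hF hne
  obtain ⟨p, hp, hmax⟩ := hne
  refine ⟨l, l p, hmax, ?_⟩
  ext x
  exact and_congr_right fun hx =>
    ⟨fun h => (hmax x hx).antisymm (h p hp), fun h => by rwa [h]⟩

lemma ne_zero_of_face_ne {K : Set E} (hne : {x ∈ K | l x = c}.Nonempty)
    (h : {x ∈ K | l x = c} ≠ K) : l ≠ 0 := by
  rintro rfl
  obtain ⟨p, -, hp⟩ := hne
  exact h (sep_eq_self_iff_mem_true.2 fun _ _ => hp)

lemma face_ne_of_affineSpan_eq_top {K : Set E} (hK : affineSpan ℝ K = ⊤) (hl : l ≠ 0) :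
    {x ∈ K | l x = c} ≠ K := by
  intro h
  have hlc (x : E) : l x = c :=
    map_eq_of_mem_affineSpan (sep_eq_self_iff_mem_true.1 h) (hK ▸ AffineSubspace.mem_top ℝ E x)
  exact hl (ContinuousLinearMap.ext fun x => by simpa using (hlc x).trans (hlc 0).symm)

lemma exists_mem_extremePoints_le_map {C : Set E} (hC : IsCompact C) (l : E →L[ℝ] ℝ) {a₀ : E}
    (ha₀ : a₀ ∈ C) : ∃ a ∈ C.extremePoints ℝ, l a₀ ≤ l a := by
  obtain ⟨b, hb, hmax⟩ := hC.exists_isMaxOn ⟨a₀, ha₀⟩ l.continuous.continuousOn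
  have hexp : IsExposed ℝ C (l.toExposed C) := ContinuousLinearMap.toExposed.isExposed
  obtain ⟨a, ha⟩ := (hexp.isCompact hC).extremePoints_nonempty ⟨b, hb, hmax⟩
  exact ⟨a, hexp.isExtreme.extremePoints_subset_extremePoints ha,
    (extremePoints_subset ha).2 a₀ ha₀⟩

lemma extremePoints_face_convexHull_union_subset {V S : Set E}
    (hl : ∀ x ∈ convexHull ℝ (V ∪ S), l x ≤ c) :
    {x ∈ convexHull ℝ (V ∪ S) | l x = c}.extremePoints ℝ ⊆
      {x ∈ convexHull ℝ V | l x = c}.extremePoints ℝ ∪ {x ∈ S | l x = c} := by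
  intro x hx
  have hxc : l x = c := (extremePoints_subset hx).2
  have hxVS : x ∈ V ∪ S := extremePoints_convexHull_subset
    ((isExposed_sep_map_eq hl).isExtreme.extremePoints_subset_extremePoints hx)
  have hsub : {x ∈ convexHull ℝ V | l x = c} ⊆ {x ∈ convexHull ℝ (V ∪ S) | l x = c} :=
    fun w hw => ⟨convexHull_mono subset_union_left hw.1, hw.2⟩
  exact hxVS.imp
    (fun hxV => inter_extremePoints_subset_extremePoints_of_subset hsub
      ⟨⟨subset_convexHull ℝ V hxV, hxc⟩, hx⟩)
    fun hxS => ⟨hxS, hxc⟩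

lemma nonempty_of_span_sub_eq_top [Nontrivial E] {F : Set E} {q : E}
    (hspan : Submodule.span ℝ ((· - q) '' F) = ⊤) : F.Nonempty := by
  by_contra! rfl
  rw [image_empty, Submodule.span_empty] at hspan
  exact bot_ne_top hspan

lemma vectorSpan_eq_ker_of_span_sub_eq_top {F : Set E} {q : E} (hne : F.Nonempty)
    (hF : ∀ x ∈ F, l (x - q) = 1) (hspan : Submodule.span ℝ ((· - q) '' F) = ⊤) :
    vectorSpan ℝ F = l.ker := by
  have hle : vectorSpan ℝ F ≤ l.ker := by
    rw [vectorSpan_def, Submodule.span_le]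
    rintro _ ⟨x, hx, x', hx', rfl⟩
    simpa [sub_eq_zero] using (hF x hx).trans (hF x' hx').symm
  obtain ⟨x₀, hx₀⟩ := hne
  refine hle.antisymm fun w hw => ?_
  have hw' : w ∈ vectorSpan ℝ F ⊔ Submodule.span ℝ {x₀ - q} := by
    refine (?_ : (⊤ : Submodule ℝ E) ≤ _) Submodule.mem_top
    rw [← hspan, Submodule.span_le]
    rintro _ ⟨x, hx, rfl⟩
    change x - q ∈ _
    rw [← sub_add_sub_cancel x x₀ q]
    exact Submodule.add_mem_sup (vsub_mem_vectorSpan ℝ hx hx₀)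
      (Submodule.mem_span_singleton_self _)
  obtain ⟨v, hv, _, hr, rfl⟩ := Submodule.mem_sup.1 hw'
  obtain ⟨r, rfl⟩ := Submodule.mem_span_singleton.1 hr
  have hlv : l v = 0 := hle hv
  have hr0 : r = 0 := by simpa [-map_sub, hlv, hF x₀ hx₀] using hw
  simpa [hr0] using hv

end Functionals

section Polar

variable {E : Type*} [NormedAddCommGroup E] [NormedSpace ℝ E] {V : Set E} {q : E}

/-- The polar body of `V` with `q` as origin, as a set of functionals on `E`. Mathlib's
`StrongDual.polar` bounds `‖a v‖` instead of `a v`. -/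
def polarAt (V : Set E) (q : E) : Set (E →L[ℝ] ℝ) := {a | ∀ v ∈ V, a (v - q) ≤ 1}

lemma polarAt_convexHull (V : Set E) (q : E) : polarAt (convexHull ℝ V) q = polarAt V q := by
  refine Subset.antisymm (fun a ha v hv => ha v (subset_convexHull ℝ V hv)) fun a ha x hx => ?_
  have := forall_mem_convexHull_le (c := 1 + a q) (fun v hv => by simpa using ha v hv) x hx
  simpa using this

lemma isCompact_polarAt [FiniteDimensional ℝ E] (hq : q ∈ interior V) :
    IsCompact (polarAt V q) := by
  have hclosed : IsClosed (polarAt V q) := by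
    simp only [polarAt, Set.ofPred_forall]
    exact isClosed_biInter fun v _ => isClosed_le (by fun_prop) continuous_const
  obtain ⟨r, hr, hball⟩ := Metric.nhds_basis_closedBall.mem_iff.1 (mem_interior_iff_mem_nhds.1 hq)
  refine Metric.isCompact_of_isClosed_isBounded hclosed
    ((Metric.isBounded_closedBall (x := 0) (r := 1 / r)).subset fun a ha => ?_)
  have hle (w : E) (hw : w ∈ Metric.closedBall 0 r) : a w ≤ 1 := by
    simpa using ha (q + w) (hball (by simpa using hw))
  rw [mem_closedBall_zero_iff]
  refine ContinuousLinearMap.opNorm_bound_of_ball_bound hr 1 a fun w hw => abs_le'.2 ⟨hle w hw, ?_⟩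
  simpa using hle (-w) (by simpa using hw)

lemma eventually_add_smul_mem_polarAt (hV : V.Finite) {a b : E →L[ℝ] ℝ} (ha : a ∈ polarAt V q)
    (hb : ∀ v ∈ V, a (v - q) = 1 → b (v - q) = 0) :
    ∀ᶠ e : ℝ in nhds 0, a + e • b ∈ polarAt V q := by
  refine hV.eventually_all.2 fun v hv => ?_
  rcases (ha v hv).eq_or_lt with h | h
  · simp [-map_sub, h, hb v hv h]
  · have hcont : Continuous fun e : ℝ => (a + e • b) (v - q) := by fun_prop
    exact (hcont.tendsto 0).eventually_le_const (by simpa using h)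

lemma span_tight_eq_top_of_mem_extremePoints_polarAt [FiniteDimensional ℝ E] (hV : V.Finite)
    {a : E →L[ℝ] ℝ} (ha : a ∈ (polarAt V q).extremePoints ℝ) :
    Submodule.span ℝ ((· - q) '' {v ∈ V | a (v - q) = 1}) = ⊤ := by
  by_contra hne
  obtain ⟨b, hb0, hb⟩ := Submodule.exists_le_ker_of_lt_top _ (lt_top_iff_ne_top.2 hne)
  have hmem := eventually_add_smul_mem_polarAt (b := b.toContinuousLinearMap) hV ha.1
    fun v hv h => hb (Submodule.subset_span ⟨v, ⟨hv, h⟩, rfl⟩)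
  have hmem_neg : ∀ᶠ e : ℝ in nhds 0, a + (-e) • b.toContinuousLinearMap ∈ polarAt V q :=
    (continuous_neg.tendsto' (0 : ℝ) 0 neg_zero).eventually hmem
  obtain ⟨e, ⟨hadd, hsub⟩, he⟩ :=
    (((hmem.and hmem_neg).filter_mono nhdsWithin_le_nhds).and
      (self_mem_nhdsWithin (s := Ioi (0 : ℝ)))).exists
  have h := ha.2 hadd hsub ⟨1 / 2, 1 / 2, by norm_num, by norm_num, by norm_num, by module⟩
  have hz : e = 0 ∨ b = 0 := by simpa using h
  exact hz.elim he.ne' hb0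

end Polar

/-- A polytope `C` is simplicial if its nonempty proper exposed faces are simplices. -/
def IsSimplicial {N : ℕ} (C : Set (EuclideanSpace ℝ (Fin N))) : Prop :=
  ∀ F, IsExposed ℝ C F → F.Nonempty → F ≠ C → IsSimplexSet F

section Dimension

variable {N : ℕ} {A K : Set (EuclideanSpace ℝ (Fin N))}

lemma adim_mono (h : A ⊆ K) : adim A ≤ adim K := Submodule.finrank_mono (vectorSpan_mono ℝ h)

lemma adim_le (K : Set (EuclideanSpace ℝ (Fin N))) : adim K ≤ N := by
  simpa [adim] using (vectorSpan ℝ K).finrank_le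

lemma adim_convexHull (V : Set (EuclideanSpace ℝ (Fin N))) : adim (convexHull ℝ V) = adim V := by
  rw [adim, ← direction_affineSpan, affineSpan_convexHull, direction_affineSpan, adim]

lemma adim_eq_of_affineSpan_eq_top (h : affineSpan ℝ K = ⊤) : adim K = N := by
  rw [adim, ← direction_affineSpan, h, AffineSubspace.direction_top, finrank_top,
    finrank_euclideanSpace_fin]

lemma affineSpan_eq_top_of_adim_eq (hK : K.Nonempty) (h : adim K = N) : affineSpan ℝ K = ⊤ := by
  rw [AffineSubspace.affineSpan_eq_top_iff_vectorSpan_eq_top_of_nonempty ℝ _ _ hK]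
  exact Submodule.eq_top_of_finrank_eq (by rw [finrank_euclideanSpace_fin]; exact h)

lemma nonempty_of_adim_pos (h : 0 < adim K) : K.Nonempty := by
  by_contra! rfl
  rw [adim, vectorSpan_empty, finrank_bot] at h
  exact h.false

lemma adim_lt_adim_of_notMem_affineSpan (hAK : A ⊆ K) (hA : A.Nonempty)
    {p : EuclideanSpace ℝ (Fin N)} (hpK : p ∈ K) (hpA : p ∉ affineSpan ℝ A) : adim A < adim K := by
  obtain ⟨a, ha⟩ := hA
  refine Submodule.finrank_lt_finrank_of_lt (SetLike.lt_iff_le_and_exists.2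
    ⟨vectorSpan_mono ℝ hAK, p -ᵥ a, vsub_mem_vectorSpan ℝ hpK (hAK ha), ?_⟩)
  rwa [← direction_affineSpan, AffineSubspace.vsub_right_mem_direction_iff_mem
    (mem_affineSpan ℝ ha)]

end Dimension

section Facets

variable {N : ℕ} {V K A : Set (EuclideanSpace ℝ (Fin N))} {y z : EuclideanSpace ℝ (Fin N)}
  {l : EuclideanSpace ℝ (Fin N) →L[ℝ] ℝ} {c : ℝ}

lemma exists_mem_notMem_affineSpan_of_isFacetOf (hA : IsFacetOf K A) :
    ∃ x ∈ K, x ∉ affineSpan ℝ A := by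
  by_contra! h
  have hle : vectorSpan ℝ K ≤ vectorSpan ℝ A := by
    simpa only [direction_affineSpan] using AffineSubspace.direction_le (affineSpan_le.2 h)
  have hdim : adim K ≤ adim A := Submodule.finrank_mono hle
  have := hA.2.2
  omega

lemma notMem_affineSpan_of_isBeyond (hA : IsFacetOf K A) (hy : IsBeyond K A y) :
    y ∉ affineSpan ℝ A := by
  obtain ⟨x, hxK, hxA⟩ := exists_mem_notMem_affineSpan_of_isFacetOf hA
  exact (hy x hxK hxA).left_notMem

lemma ne_of_isBeyond_of_isBeneath (hA : IsFacetOf K A) (hy : IsBeyond K A y)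
    (hz : IsBeneath K A z) : y ≠ z := by
  rintro rfl
  obtain ⟨x, hxK, hxA⟩ := exists_mem_notMem_affineSpan_of_isFacetOf hA
  exact (hz x hxK hxA).not_sOppSide (hy x hxK hxA)

lemma face_ne_of_isBeyond (hA : IsFacetOf K A) (hy : IsBeyond K A y)
    (hK : ∀ x ∈ K, l x ≤ c) (hly : l y ≤ c) : {x ∈ K | l x = c} ≠ A := by
  rintro rfl
  obtain ⟨x, hxK, hxA⟩ := exists_mem_notMem_affineSpan_of_isFacetOf hA
  have hlx : l x < c := (hK x hxK).lt_of_ne fun h => hxA (mem_affineSpan ℝ ⟨hxK, h⟩)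
  have hspan : ∀ p ∈ affineSpan ℝ {x ∈ K | l x = c}, l p = c := fun p =>
    map_eq_of_mem_affineSpan fun x hx => hx.2
  exact (lt_map_of_sOppSide hspan (hy x hxK hxA) hlx).not_ge hly

lemma isFacetOf_of_adim_add_one_eq (hK : ∀ x ∈ K, l x ≤ c) {p : EuclideanSpace ℝ (Fin N)}
    (hp : p ∈ K) (hlp : l p ≠ c) (hA : A ⊆ {x ∈ K | l x = c}) (hne : A.Nonempty)
    (hdim : adim A + 1 = N) : IsFacetOf K {x ∈ K | l x = c} := by
  have hmono : adim A ≤ adim {x ∈ K | l x = c} := adim_mono hA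
  have hlt : adim {x ∈ K | l x = c} < adim K :=
    adim_lt_adim_of_notMem_affineSpan (sep_subset _ _) (hne.mono hA) hp fun h =>
      hlp (map_eq_of_mem_affineSpan (fun _ hx => hx.2) h)
  have hle : adim K ≤ N := adim_le K
  exact ⟨isExposed_sep_map_eq hK, hne.mono hA, by omega⟩

lemma affineSpan_eq_top_of_isFacetOf {F : Set (EuclideanSpace ℝ (Fin N))} (hF : IsFacetOf K F)
    (hAF : A ⊆ F) (hdim : adim A + 1 = N) : affineSpan ℝ K = ⊤ := by
  have hmono : adim A ≤ adim F := adim_mono hAF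
  have hle : adim K ≤ N := adim_le K
  exact affineSpan_eq_top_of_adim_eq (hF.2.1.mono hF.1.subset) (by have := hF.2.2; omega)

lemma isFacetOf_of_mem_extremePoints_polarAt (hV : V.Finite) {q : EuclideanSpace ℝ (Fin N)}
    (hspan : affineSpan ℝ V = ⊤) {a : EuclideanSpace ℝ (Fin N) →L[ℝ] ℝ} (ha0 : a ≠ 0)
    (ha : a ∈ (polarAt V q).extremePoints ℝ) :
    IsFacetOf (convexHull ℝ V) {x ∈ convexHull ℝ V | a x = 1 + a q} := by
  set F := {x ∈ convexHull ℝ V | a x = 1 + a q}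
  have hle : ∀ x ∈ convexHull ℝ V, a x ≤ 1 + a q := fun x hx => by
    simpa using (polarAt_convexHull V q).ge ha.1 x hx
  have hFtop : Submodule.span ℝ ((· - q) '' F) = ⊤ := by
    rw [eq_top_iff, ← span_tight_eq_top_of_mem_extremePoints_polarAt hV ha]
    refine Submodule.span_mono (image_mono fun v hv => ⟨subset_convexHull ℝ V hv.1, ?_⟩)
    simpa [sub_eq_iff_eq_add] using hv.2
  have : Nontrivial (EuclideanSpace ℝ (Fin N)) := by
    by_contra! _
    exact ha0 (Subsingleton.elim _ _)
  have hne : F.Nonempty := nonempty_of_span_sub_eq_top hFtop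
  have hker : vectorSpan ℝ F = a.ker :=
    vectorSpan_eq_ker_of_span_sub_eq_top hne (fun x hx => by simp [hx.2]) hFtop
  refine ⟨isExposed_sep_map_eq hle, hne, ?_⟩
  rw [adim_convexHull, adim_eq_of_affineSpan_eq_top hspan, adim, hker]
  have ha0' : (a : EuclideanSpace ℝ (Fin N) →ₗ[ℝ] ℝ) ≠ 0 :=
    fun h => ha0 (ContinuousLinearMap.coe_injective h)
  simpa using Module.Dual.finrank_ker_add_one_of_ne_zero ha0'

lemma exists_isFacetOf_not_isBeneath (hV : V.Finite) (hspan : affineSpan ℝ V = ⊤) (hl : l ≠ 0)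
    (hK : ∀ x ∈ convexHull ℝ V, l x ≤ c) {x : EuclideanSpace ℝ (Fin N)}
    (hx : x ∈ convexHull ℝ V) (hlx : l x = c) (hly : c ≤ l y) :
    ∃ F, IsFacetOf (convexHull ℝ V) F ∧ x ∈ F ∧ ¬IsBeneath (convexHull ℝ V) F y := by
  obtain ⟨q, hq⟩ := interior_convexHull_nonempty_iff_affineSpan_eq_top.2 hspan
  have hpos : 0 < c - l q := sub_pos.2 (map_lt_of_mem_interior hl hK hq)
  set D := polarAt (convexHull ℝ V) q
  have hDle : ∀ a ∈ D, ContinuousLinearMap.apply ℝ ℝ (x - q) a ≤ 1 := fun a ha => ha x hx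
  have hM := isExposed_sep_map_eq hDle
  -- The normalisation of `l` lies on the face of the polar body which `x` exposes.
  have hlM : (c - l q)⁻¹ • l ∈ {a ∈ D | ContinuousLinearMap.apply ℝ ℝ (x - q) a = 1} := by
    refine ⟨fun w hw => ?_, ?_⟩
    · simpa [inv_mul_le_iff₀ hpos] using hK w hw
    · simp [hlx, hpos.ne']
  obtain ⟨a, haM, hmax⟩ := exists_mem_extremePoints_le_map
    (hM.isCompact (isCompact_polarAt hq)) (ContinuousLinearMap.apply ℝ ℝ (y - q)) hlM
  have haD : a ∈ (polarAt V q).extremePoints ℝ := polarAt_convexHull V q ▸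
    hM.isExtreme.extremePoints_subset_extremePoints haM
  have hax : a x = 1 + a q := by
    simpa [sub_eq_iff_eq_add] using (extremePoints_subset haM).2
  have hay : 1 + a q ≤ a y := by
    have hly' : 1 ≤ (c - l q)⁻¹ * (l y - l q) := by rw [le_inv_mul_iff₀ hpos]; linarith
    have hmax' : (c - l q)⁻¹ * (l y - l q) ≤ a y - a q := by simpa using hmax
    linarith
  have ha0 : a ≠ 0 := by rintro rfl; simp at hax
  refine ⟨_, isFacetOf_of_mem_extremePoints_polarAt hV hspan ha0 haD, ⟨hx, hax⟩, fun hy => ?_⟩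
  have hF : ∀ p ∈ affineSpan ℝ {x ∈ convexHull ℝ V | a x = 1 + a q}, a p = 1 + a q := fun p =>
    map_eq_of_mem_affineSpan fun x hx => hx.2
  have hqF : a q < 1 + a q := by linarith
  exact (map_lt_of_sSameSide hF (hy q (interior_subset hq) fun h => hqF.ne (hF q h)) hqF).not_ge hay

lemma face_subset_of_forall_isBeneath (hV : V.Finite) (hspan : affineSpan ℝ V = ⊤)
    (hy : ∀ F, IsFacetOf (convexHull ℝ V) F → F ≠ A → IsBeneath (convexHull ℝ V) F y)
    (hl : l ≠ 0) (hK : ∀ x ∈ convexHull ℝ V, l x ≤ c) (hly : c ≤ l y) :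
    {x ∈ convexHull ℝ V | l x = c} ⊆ A := by
  rintro x ⟨hx, hlx⟩
  obtain ⟨F, hF, hxF, hyF⟩ := exists_isFacetOf_not_isBeneath hV hspan hl hK hx hlx hly
  by_contra hxA
  exact hyF (hy F hF fun h => hxA (h ▸ hxF))

end Facets

section Simplices

variable {N : ℕ} {F G V K A B : Set (EuclideanSpace ℝ (Fin N))} {y z : EuclideanSpace ℝ (Fin N)}

lemma isSimplexSet_of_isExposed (hAK : A ⊆ K) (hBK : B ⊆ K)
    (hsimp : ∀ F, IsExposed ℝ K F → F.Nonempty → F ≠ K → ¬F ⊆ A → ¬F ⊆ B → IsSimplexSet F)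
    (hA : IsSimplicial A) (hB : IsSimplicial B) (hG : IsExposed ℝ K G) (hGK : G ≠ K)
    (hGA : G ≠ A) (hGB : G ≠ B) : IsSimplexSet G := by
  rcases G.eq_empty_or_nonempty with rfl | hne
  · rw [IsSimplexSet, extremePoints_empty]
    exact affineIndependent_of_subsingleton ℝ _
  by_cases hsubA : G ⊆ A
  · exact hA G (hG.mono hAK hsubA) hne hGA
  by_cases hsubB : G ⊆ B
  · exact hB G (hG.mono hBK hsubB) hne hGB
  exact hsimp G hG hne hGK hsubA hsubB

lemma isSimplexSet_of_extremePoints_subset_insert (hG : IsSimplexSet G) (hGA : G ⊆ A)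
    (hy : y ∉ affineSpan ℝ A) (hF : F.extremePoints ℝ ⊆ insert y (G.extremePoints ℝ)) :
    IsSimplexSet F :=
  (affineIndependent_insert hG fun h =>
    hy (affineSpan_mono ℝ (extremePoints_subset.trans hGA) h)).mono hF

lemma isSimplexSet_of_extremePoints_subset_pair (hyz : y ≠ z)
    (hF : F.extremePoints ℝ ⊆ {y, z}) : IsSimplexSet F :=
  (affineIndependent_pair hyz).mono hF

lemma isSimplexSet_face_convexHull_union_pair {l : EuclideanSpace ℝ (Fin N) →L[ℝ] ℝ} {c : ℝ}
    (hQ : ∀ x ∈ convexHull ℝ (V ∪ {y, z}), l x ≤ c) (hyz : y ≠ z)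
    (hG : IsSimplexSet {x ∈ convexHull ℝ V | l x = c}) (hAB : Disjoint A B)
    (hyA : y ∉ affineSpan ℝ A) (hzB : z ∉ affineSpan ℝ B)
    (hly : l y = c → {x ∈ convexHull ℝ V | l x = c} ⊆ A)
    (hlz : l z = c → {x ∈ convexHull ℝ V | l x = c} ⊆ B) :
    IsSimplexSet {x ∈ convexHull ℝ (V ∪ {y, z}) | l x = c} := by
  set G := {x ∈ convexHull ℝ V | l x = c}
  have hext : ∀ x ∈ {x ∈ convexHull ℝ (V ∪ {y, z}) | l x = c}.extremePoints ℝ,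
      x ∈ G.extremePoints ℝ ∨ x = y ∧ l y = c ∨ x = z ∧ l z = c := by
    intro x hx
    obtain hxG | ⟨rfl | rfl, hxc⟩ := extremePoints_face_convexHull_union_subset hQ hx
    exacts [.inl hxG, .inr (.inl ⟨rfl, hxc⟩), .inr (.inr ⟨rfl, hxc⟩)]
  by_cases hy : l y = c <;> by_cases hz : l z = c
  · have hG_empty : G = ∅ := disjoint_self.1 (hAB.mono (hly hy) (hlz hz))
    exact isSimplexSet_of_extremePoints_subset_pair hyz fun x hx => by
      simpa [hG_empty, hy, hz] using hext x hx
  · exact isSimplexSet_of_extremePoints_subset_insert hG (hly hy) hyA fun x hx => by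
      simpa [hy, hz, or_comm] using hext x hx
  · exact isSimplexSet_of_extremePoints_subset_insert hG (hlz hz) hzB fun x hx => by
      simpa [hy, hz, or_comm] using hext x hx
  · exact hG.mono fun x hx => by simpa [hy, hz] using hext x hx

end Simplices

section Layers

variable {N : ℕ} {ι : Type*} {P : ι → Set (EuclideanSpace ℝ (Fin N))} {t : ι → ℝ}
  {u : EuclideanSpace ℝ (Fin N)} {j k : ι}

lemma isFacetOf_convexHull_iUnion_inter_of_forall_le
    (hP : ∀ i, P i ⊆ {x | ⟪x, u⟫ = t i}) (htk : ∀ i, t i ≤ t k) (hjk : t j ≠ t k)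
    (hj : (P j).Nonempty) (hk : (P k).Nonempty) (hdim : adim (P k) + 1 = N) :
    IsFacetOf (convexHull ℝ (⋃ i, P i)) (convexHull ℝ (⋃ i, P i) ∩ {x | ⟪x, u⟫ = t k}) := by
  obtain ⟨p, hp⟩ := hj
  have hl (x : EuclideanSpace ℝ (Fin N)) : innerSL ℝ u x = ⟪x, u⟫ := by
    rw [innerSL_apply_apply, real_inner_comm]
  have hsub (i : ι) : P i ⊆ convexHull ℝ (⋃ i, P i) :=
    (subset_iUnion P i).trans (subset_convexHull ℝ _)
  have hle : ∀ x ∈ convexHull ℝ (⋃ i, P i), innerSL ℝ u x ≤ t k :=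
    forall_mem_convexHull_le fun x hx => by
      obtain ⟨i, hi⟩ := mem_iUnion.1 hx
      exact (hl x).trans_le ((hP i hi).trans_le (htk i))
  have hlp : innerSL ℝ u p ≠ t k := by
    rw [hl, hP j hp]
    exact hjk
  have h := isFacetOf_of_adim_add_one_eq hle (hsub j hp) hlp
    (fun x hx => ⟨hsub k hx, (hl x).trans (hP k hx)⟩) hk hdim
  simp only [hl] at h
  exact h

lemma isFacetOf_convexHull_iUnion_inter_of_forall_ge
    (hP : ∀ i, P i ⊆ {x | ⟪x, u⟫ = t i}) (htk : ∀ i, t k ≤ t i) (hjk : t j ≠ t k)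
    (hj : (P j).Nonempty) (hk : (P k).Nonempty) (hdim : adim (P k) + 1 = N) :
    IsFacetOf (convexHull ℝ (⋃ i, P i)) (convexHull ℝ (⋃ i, P i) ∩ {x | ⟪x, u⟫ = t k}) := by
  have hP' (i : ι) : P i ⊆ {x | ⟪x, -u⟫ = -t i} := fun x hx => by
    simpa only [inner_neg_right, neg_inj, mem_ofPred_eq] using hP i hx
  simpa only [inner_neg_right, neg_inj] using isFacetOf_convexHull_iUnion_inter_of_forall_le hP'
    (fun i => neg_le_neg (htk i)) (neg_injective.ne hjk) hj hk hdim

end Layers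

theorem stmt9_general {N : ℕ} {V A B : Set (EuclideanSpace ℝ (Fin N))} (hV : V.Finite)
    (hspan : affineSpan ℝ V = ⊤) (hA : IsFacetOf (convexHull ℝ V) A)
    (hB : IsFacetOf (convexHull ℝ V) B) (hAB : Disjoint A B)
    (hsimp : ∀ F, IsExposed ℝ (convexHull ℝ V) F → F.Nonempty → F ≠ convexHull ℝ V →
      ¬F ⊆ A → ¬F ⊆ B → IsSimplexSet F)
    (hAs : IsSimplicial A) (hBs : IsSimplicial B) (y z : EuclideanSpace ℝ (Fin N))
    (hy₁ : IsBeyond (convexHull ℝ V) A y)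
    (hy₂ : ∀ F, IsFacetOf (convexHull ℝ V) F → F ≠ A → IsBeneath (convexHull ℝ V) F y)
    (hz₁ : IsBeyond (convexHull ℝ V) B z)
    (hz₂ : ∀ F, IsFacetOf (convexHull ℝ V) F → F ≠ B → IsBeneath (convexHull ℝ V) F z) :
    adim (convexHull ℝ (V ∪ {y, z})) = N ∧ IsSimplicial (convexHull ℝ (V ∪ {y, z})) := by
  refine ⟨?_, fun F hF hne hFQ => ?_⟩
  · rw [adim_convexHull]
    exact adim_eq_of_affineSpan_eq_top (top_le_iff.1 (hspan ▸ affineSpan_mono ℝ subset_union_left))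
  obtain ⟨l, c, hQ, rfl⟩ := exists_supporting_functional hF hne
  have hl : l ≠ 0 := ne_zero_of_face_ne hne hFQ
  have hK : ∀ x ∈ convexHull ℝ V, l x ≤ c := fun x hx =>
    hQ x (convexHull_mono subset_union_left hx)
  have hly : l y ≤ c := hQ y (subset_convexHull ℝ _ (by simp))
  have hlz : l z ≤ c := hQ z (subset_convexHull ℝ _ (by simp))
  have hG : IsSimplexSet {x ∈ convexHull ℝ V | l x = c} :=
    isSimplexSet_of_isExposed hA.1.subset hB.1.subset hsimp hAs hBs (isExposed_sep_map_eq hK)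
      (face_ne_of_affineSpan_eq_top ((affineSpan_convexHull V).trans hspan) hl)
      (face_ne_of_isBeyond hA hy₁ hK hly) (face_ne_of_isBeyond hB hz₁ hK hlz)
  have hyz : y ≠ z := ne_of_isBeyond_of_isBeneath hA hy₁ (hz₂ A hA (hAB.ne hA.2.1.ne_empty))
  exact isSimplexSet_face_convexHull_union_pair hQ hyz hG hAB
    (notMem_affineSpan_of_isBeyond hA hy₁) (notMem_affineSpan_of_isBeyond hB hz₁)
    (fun h => face_subset_of_forall_isBeneath hV hspan hy₂ hl hK h.ge)
    (fun h => face_subset_of_forall_isBeneath hV hspan hz₂ hl hK h.ge)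

theorem stmt9 (d m : ℕ) (hd : 2 ≤ d) (hm : 2 ≤ m)
    (u : EuclideanSpace ℝ (Fin (d + 1))) (hu : ‖u‖ = 1)
    (t : Fin m → ℝ) (ht : StrictMono t)
    (P : Fin m → Set (EuclideanSpace ℝ (Fin (d + 1))))
    (hfin : ∀ i, (P i).Finite)
    (hsub : ∀ i, P i ⊆ {x | ⟪x, u⟫ = t i})
    (hdim : ∀ i, adim (convexHull ℝ (P i)) = d)
    (KP KP1 KPm Q : Set (EuclideanSpace ℝ (Fin (d + 1))))
    (hKP : KP = convexHull ℝ (⋃ i, P i))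
    (hKP1 : KP1 = KP ∩ {x | ⟪x, u⟫ = t ⟨0, by omega⟩})
    (hKPm : KPm = KP ∩ {x | ⟪x, u⟫ = t ⟨m - 1, by omega⟩})
    -- every nonempty proper exposed face of `KP` contained neither in Π₁ nor in Π_m
    -- is a simplex
    (hsimp : ∀ F : Set (EuclideanSpace ℝ (Fin (d + 1))),
      IsExposed ℝ KP F → F.Nonempty → F ≠ KP →
      ¬ F ⊆ {x | ⟪x, u⟫ = t ⟨0, by omega⟩} →
      ¬ F ⊆ {x | ⟪x, u⟫ = t ⟨m - 1, by omega⟩} →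
      IsSimplexSet F)
    -- `KP1` and `KPm` are simplicial polytopes
    (hsimp1 : ∀ F : Set (EuclideanSpace ℝ (Fin (d + 1))),
      IsExposed ℝ KP1 F → F.Nonempty → F ≠ KP1 → IsSimplexSet F)
    (hsimpm : ∀ F : Set (EuclideanSpace ℝ (Fin (d + 1))),
      IsExposed ℝ KPm F → F.Nonempty → F ≠ KPm → IsSimplexSet F)
    (y z : EuclideanSpace ℝ (Fin (d + 1)))
    (hy₁ : IsBeyond KP KP1 y)
    (hy₂ : ∀ F, IsFacetOf KP F → F ≠ KP1 → IsBeneath KP F y)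
    (hz₁ : IsBeyond KP KPm z)
    (hz₂ : ∀ F, IsFacetOf KP F → F ≠ KPm → IsBeneath KP F z)
    (hQ : Q = convexHull ℝ ((⋃ i, P i) ∪ {y, z})) :
    adim Q = d + 1 ∧
    ∀ F : Set (EuclideanSpace ℝ (Fin (d + 1))),
      IsExposed ℝ Q F → F.Nonempty → F ≠ Q → IsSimplexSet F := by
  subst hKP hKP1 hKPm hQ
  have hlt : t ⟨0, by omega⟩ < t ⟨m - 1, by omega⟩ := ht (by rw [Fin.mk_lt_mk]; omega)
  have hne i : (P i).Nonempty :=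
    convexHull_nonempty_iff.1 (nonempty_of_adim_pos (by rw [hdim i]; omega))
  have hdim' i : adim (P i) + 1 = d + 1 := by rw [← adim_convexHull, hdim]
  have hbot := isFacetOf_convexHull_iUnion_inter_of_forall_ge hsub
    (fun i => ht.monotone (Nat.zero_le i)) hlt.ne' (hne _) (hne _) (hdim' ⟨0, by omega⟩)
  have htop := isFacetOf_convexHull_iUnion_inter_of_forall_le hsub
    (fun i => ht.monotone (Nat.le_sub_one_of_lt i.2)) hlt.ne (hne _) (hne _) (hdim' _)
  have hspan : affineSpan ℝ (⋃ i, P i) = ⊤ :=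
    (affineSpan_convexHull _).symm.trans (affineSpan_eq_top_of_isFacetOf htop
      (subset_inter ((subset_iUnion P _).trans (subset_convexHull ℝ _)) (hsub _)) (hdim' _))
  have hdisj : Disjoint {x | ⟪x, u⟫ = t ⟨0, by omega⟩} {x | ⟪x, u⟫ = t ⟨m - 1, by omega⟩} :=
    disjoint_left.2 fun _ hx₁ hxm => hlt.ne (hx₁.symm.trans hxm)
  exact stmt9_general (finite_iUnion hfin) hspan hbot htop ((hdisj.inter_left' _).inter_right' _)
    (fun F hF hF₁ hF₂ hbot htop => hsimp F hF hF₁ hF₂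
      (fun h => hbot (subset_inter hF.subset h)) fun h => htop (subset_inter hF.subset h))
    hsimp1 hsimpm y z hy₁ hy₂ hz₁ hz₂
end

section
/- Fix an odd integer d ≥ 3. There exist a constant c > 0 and an integer n_0, depending only on d, such that for all integers n, m ≥ n_0 there exist d-dimensional polytopes 𝒫 and 𝒬 in E^d with exactly n and m vertices respectively, such that the total number of nonempty exposed faces of the Minkowski sum 𝒫 + 𝒬 is at least c · (n·m^{⌊d/2⌋} + m·n^{⌊d/2⌋}). (Lower bound half of the Minkowski-sum consequence of Theorem 2.6 stated in Section 7.) -/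
open Set Pointwise

/-- The combinatorial complexity of `C`: the number of nonempty exposed faces of `C`. -/
noncomputable def totalFaces {N : ℕ} (C : Set (EuclideanSpace ℝ (Fin N))) : ℕ :=
  {F : Set (EuclideanSpace ℝ (Fin N)) | IsExposed ℝ C F ∧ F.Nonempty}.ncard

/-!
Write `d = 2k + 1` with coordinates indexed by `0, …, 2k`, and let `e` be the last basis vector. A
polynomial `q` of degree at most `2k` acts on `E^d` through its coefficients, and on the moment
curve `(1, u, …, u^(2k))` this functional is evaluation of `q` at `u`.

Let `G` be a `k`-set of parameters and `p = ∏_{u ∈ G} (X - u)²`. For every constant `t`, the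
functional `t - p` is maximal on the moment curve exactly at the points with parameter in `G`.
Its last coefficient is `-1` whatever `G` is, and its constant coefficient can be prescribed through
`t`. Hence on the planar parabola `(s, 0, …, 0, s²)` it can be made maximal exactly at any given
`s = s₀`, without disturbing `G`. So all pairs `(s₀, G)` give distinct faces of the sum of a polygon
on the parabola and a cyclic polytope on the moment curve. Both are made full-dimensional by
adding vertices pushed far out in the direction `e`, in which all these functionals are negative.
-/

section ToExposed

variable {E : Type*} [AddCommGroup E] [Module ℝ E] [TopologicalSpace E] {l l' : StrongDual ℝ E}
  {S T : Set E} {x y : E}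

lemma toExposed_convexHull (l : StrongDual ℝ E) (S : Set E) :
    l.toExposed (convexHull ℝ S) = convexHull ℝ (l.toExposed S) := by
  apply Subset.antisymm
  · rintro x ⟨hx, hmax⟩
    let K : Set E := {z | l z ≤ l x ∧ (l z = l x → z ∈ convexHull ℝ (l.toExposed S))}
    have hle : ∀ z ∈ S, l z ≤ l x := fun z hz => hmax z (subset_convexHull ℝ S hz)
    have hSK : S ⊆ K := fun z hz =>
      ⟨hle z hz, fun h => subset_convexHull ℝ _ ⟨hz, fun y hy => (hle y hy).trans_eq h.symm⟩⟩
    have hK : Convex ℝ K := by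
      rw [convex_iff_forall_pos]
      rintro y ⟨hy, hy'⟩ z ⟨hz, hz'⟩ a b ha hb hab
      have hxab : l x = a * l x + b * l x := by rw [← add_mul, hab, one_mul]
      have hya := mul_le_mul_of_nonneg_left hy ha.le
      have hzb := mul_le_mul_of_nonneg_left hz hb.le
      simp only [K, mem_ofPred_eq, map_add, map_smul, smul_eq_mul]
      refine ⟨by linarith, fun h => convex_convexHull ℝ _ (hy' ?_) (hz' ?_) ha.le hb.le hab⟩
      · exact mul_left_cancel₀ ha.ne' (by linarith)
      · exact mul_left_cancel₀ hb.ne' (by linarith)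
    exact (convexHull_min hSK hK hx).2 rfl
  · rintro x hx
    have hmax : ∀ z ∈ S, l.toExposed S ⊆ {w | l z ≤ l w} := fun z hz w hw => hw.2 z hz
    refine ⟨convexHull_mono (fun z hz => hz.1) hx, fun y hy => ?_⟩
    refine convexHull_min (t := {w | l w ≤ l x}) (fun z hz => ?_)
      (convex_halfSpace_le l.isLinear (l x)) hy
    exact convexHull_min (hmax z hz) (convex_halfSpace_ge l.isLinear (l z)) hx

lemma toExposed_convexHull_inter (l : StrongDual ℝ E) (S : Set E) :
    l.toExposed (convexHull ℝ S) ∩ S = l.toExposed S := by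
  apply Subset.antisymm
  · exact fun x hx => ⟨hx.2, fun y hy => hx.1.2 y (subset_convexHull ℝ S hy)⟩
  · rw [toExposed_convexHull]
    exact fun x hx => ⟨subset_convexHull ℝ _ hx, hx.1⟩

lemma finite_setOf_isExposed_convexHull (hS : S.Finite) :
    {F | IsExposed ℝ (convexHull ℝ S) F ∧ F.Nonempty}.Finite := by
  refine (hS.finite_subsets.image (convexHull ℝ)).subset ?_
  rintro F ⟨hF, hne⟩
  obtain ⟨l, rfl⟩ := hF hne
  exact ⟨l.toExposed S, fun x hx => hx.1, (toExposed_convexHull l S).symm⟩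

lemma extremePoints_convexHull_eq_self (h : ∀ x ∈ S, ∃ l : StrongDual ℝ E, l.toExposed S = {x}) :
    (convexHull ℝ S).extremePoints ℝ = S := by
  refine extremePoints_convexHull_subset.antisymm fun x hx => ?_
  obtain ⟨l, hl⟩ := h x hx
  have hface : l.toExposed (convexHull ℝ S) = {x} := by
    rw [toExposed_convexHull, hl, convexHull_singleton]
  rw [← isExtreme_singleton, ← hface]
  exact ContinuousLinearMap.toExposed.isExposed.isExtreme

lemma toExposed_nonempty_of_finite (hS : S.Finite) (hne : S.Nonempty) (l : StrongDual ℝ E) :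
    (l.toExposed S).Nonempty :=
  exists_max_image S l hS hne

lemma add_mem_toExposed_add_iff (hx : x ∈ S) (hy : y ∈ T) :
    x + y ∈ l.toExposed (S + T) ↔ x ∈ l.toExposed S ∧ y ∈ l.toExposed T := by
  constructor
  · rintro ⟨-, hmax⟩
    refine ⟨⟨hx, fun z hz => ?_⟩, hy, fun z hz => ?_⟩
    · simpa using hmax _ (add_mem_add hz hy)
    · simpa using hmax _ (add_mem_add hx hz)
  · rintro ⟨⟨-, hxmax⟩, -, hymax⟩
    refine ⟨add_mem_add hx hy, ?_⟩
    rintro _ ⟨z, hz, w, hw, rfl⟩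
    simpa using add_le_add (hxmax z hz) (hymax w hw)

lemma toExposed_subset_of_toExposed_add_subset (hT : (l.toExposed T).Nonempty)
    (h : l.toExposed (S + T) ⊆ l'.toExposed (S + T)) : l.toExposed S ⊆ l'.toExposed S := by
  obtain ⟨y, hy⟩ := hT
  intro x hx
  have hxy := h ((add_mem_toExposed_add_iff hx.1 hy.1).2 ⟨hx, hy⟩)
  exact ((add_mem_toExposed_add_iff hx.1 hy.1).1 hxy).1

lemma toExposed_eq_of_toExposed_add_convexHull_eq (hT : T.Finite) (hne : T.Nonempty)
    (h : l.toExposed (convexHull ℝ S + convexHull ℝ T) =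
      l'.toExposed (convexHull ℝ S + convexHull ℝ T)) : l.toExposed S = l'.toExposed S := by
  have hnonempty (l : StrongDual ℝ E) : (l.toExposed (convexHull ℝ T)).Nonempty := by
    rw [toExposed_convexHull]
    exact (toExposed_nonempty_of_finite hT hne l).convexHull
  rw [← toExposed_convexHull_inter l, ← toExposed_convexHull_inter l',
    (toExposed_subset_of_toExposed_add_subset (hnonempty l) h.subset).antisymm
      (toExposed_subset_of_toExposed_add_subset (hnonempty l') h.superset)]

lemma toExposed_union_eq_left (hx : x ∈ S) (h : ∀ y ∈ T, l y < l x) :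
    l.toExposed (S ∪ T) = l.toExposed S := by
  apply Subset.antisymm
  · rintro z ⟨hz | hz, hmax⟩
    · exact ⟨hz, fun y hy => hmax y (.inl hy)⟩
    · exact absurd (hmax x (.inl hx)) (h z hz).not_ge
  · rintro z ⟨hz, hmax⟩
    refine ⟨.inl hz, ?_⟩
    rintro y (hy | hy)
    · exact hmax y hy
    · exact (h y hy).le.trans (hmax x hx)

lemma toExposed_image_add_right (l : StrongDual ℝ E) (S : Set E) (v : E) :
    l.toExposed ((· + v) '' S) = (· + v) '' l.toExposed S := by
  ext z
  constructor
  · rintro ⟨⟨x, hx, rfl⟩, hmax⟩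
    exact ⟨x, ⟨hx, fun y hy => by simpa using hmax _ (mem_image_of_mem _ hy)⟩, rfl⟩
  · rintro ⟨x, ⟨hx, hmax⟩, rfl⟩
    exact ⟨mem_image_of_mem _ hx, forall_mem_image.2 fun y hy => by simpa using hmax y hy⟩

lemma toExposed_image_of_forall_le {ι : Type*} {γ : ι → E} {I : Set ι} {i₀ : ι} (hi₀ : i₀ ∈ I)
    (h : ∀ i ∈ I, l (γ i) ≤ l (γ i₀)) :
    l.toExposed (γ '' I) = γ '' {i ∈ I | l (γ i) = l (γ i₀)} := by
  apply Subset.antisymm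
  · rintro _ ⟨⟨i, hi, rfl⟩, hmax⟩
    exact ⟨i, ⟨hi, (h i hi).antisymm (hmax _ (mem_image_of_mem γ hi₀))⟩, rfl⟩
  · rintro _ ⟨i, ⟨hi, heq⟩, rfl⟩
    exact ⟨mem_image_of_mem γ hi, forall_mem_image.2 fun j hj => (h j hj).trans_eq heq.symm⟩

end ToExposed

section AdjoinFar

open Filter

variable {E : Type*} [AddCommGroup E] [Module ℝ E] {S D : Set E} {e : E}

/-- The set `S` together with the points of `D` translated by `A • e`. It is used for large `A`,
when the translated points lie beyond every functional that is negative at `e`. -/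
def adjoinFar (S D : Set E) (e : E) (A : ℝ) : Set E :=
  S ∪ (· + A • e) '' D

lemma finite_adjoinFar (hS : S.Finite) (hD : D.Finite) (e : E) (A : ℝ) :
    (adjoinFar S D e A).Finite :=
  hS.union (hD.image _)

lemma vectorSpan_adjoinFar_eq_top (A : ℝ)
    (he : ∀ f : E →ₗ[ℝ] ℝ, (∀ x ∈ S, ∀ y ∈ S, f x = f y) → f e = 0)
    (hSD : ∀ f : E →ₗ[ℝ] ℝ, (∀ x ∈ S ∪ D, ∀ y ∈ S ∪ D, f x = f y) → f = 0) :
    vectorSpan ℝ (adjoinFar S D e A) = ⊤ := by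
  by_contra hne
  obtain ⟨f, hf_ne, hf⟩ := Submodule.exists_le_ker_of_lt_top _ (lt_top_iff_ne_top.2 hne)
  have hconst : ∀ x ∈ adjoinFar S D e A, ∀ y ∈ adjoinFar S D e A, f x = f y := fun x hx y hy => by
    simpa [sub_eq_zero] using hf (vsub_mem_vectorSpan ℝ hx hy)
  have hfe : f e = 0 := he f fun x hx y hy => hconst x (.inl hx) y (.inl hy)
  have hshift : ∀ x ∈ S ∪ D, ∃ x' ∈ adjoinFar S D e A, f x = f x' := by
    rintro x (hx | hx)
    · exact ⟨x, .inl hx, rfl⟩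
    · exact ⟨x + A • e, .inr (mem_image_of_mem _ hx), by simp [hfe]⟩
  refine hf_ne (hSD f fun x hx y hy => ?_)
  obtain ⟨x', hx', hxx'⟩ := hshift x hx
  obtain ⟨y', hy', hyy'⟩ := hshift y hy
  rw [hxx', hyy', hconst x' hx' y' hy']

lemma ncard_adjoinFar (hS : S.Finite) (hD : D.Finite)
    (hDexp : ∀ y ∈ D, ∃ l : E →ₗ[ℝ] ℝ, l e = 0 ∧ ∀ x ∈ S, l x < l y) (A : ℝ) :
    (adjoinFar S D e A).ncard = S.ncard + D.ncard := by
  have hdisj : Disjoint S ((· + A • e) '' D) := by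
    rw [Set.disjoint_right, forall_mem_image]
    intro y hy hmem
    obtain ⟨l, hle, hlt⟩ := hDexp y hy
    simpa [hle] using hlt _ hmem
  rw [adjoinFar, ncard_union_eq hdisj hS (hD.image _),
    ncard_image_of_injective _ (add_left_injective _)]

variable [TopologicalSpace E] {l : StrongDual ℝ E}

lemma eventually_toExposed_adjoinFar (hS : S.Nonempty) (hD : D.Finite) (hl : l e < 0) :
    ∀ᶠ A in atTop, l.toExposed (adjoinFar S D e A) = l.toExposed S := by
  obtain ⟨x, hx⟩ := hS
  have hlt : ∀ y ∈ D, ∀ᶠ A : ℝ in atTop, l (y + A • e) < l x := fun y _ => by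
    have htendsto : Tendsto (fun A => l y + A * l e) atTop atBot :=
      tendsto_atBot_add_const_left _ _ (tendsto_id.atTop_mul_const_of_neg hl)
    simpa only [map_add, map_smul, smul_eq_mul] using htendsto.eventually_lt_atBot (l x)
  filter_upwards [hD.eventually_all.2 hlt] with A hA
  exact toExposed_union_eq_left hx (forall_mem_image.2 hA)

lemma toExposed_adjoinFar_eq_singleton {y : E} (hle : l e = 0) (hS : ∀ x ∈ S, l x < l y)
    (hD : l.toExposed D = {y}) (A : ℝ) : l.toExposed (adjoinFar S D e A) = {y + A • e} := by
  have hy : y ∈ D := (hD.superset rfl).1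
  rw [adjoinFar, union_comm, toExposed_union_eq_left (mem_image_of_mem _ hy),
    toExposed_image_add_right, hD, image_singleton]
  simpa [hle] using hS

lemma eventually_ncard_extremePoints_adjoinFar (hS : S.Finite) (hD : D.Finite)
    (hSexp : ∀ x ∈ S, ∃ l : StrongDual ℝ E, l e < 0 ∧ l.toExposed S = {x})
    (hDexp : ∀ y ∈ D, ∃ l : StrongDual ℝ E,
      l e = 0 ∧ (∀ x ∈ S, l x < l y) ∧ l.toExposed D = {y}) :
    ∀ᶠ A in atTop, ((convexHull ℝ (adjoinFar S D e A)).extremePoints ℝ).ncard =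
      S.ncard + D.ncard := by
  have hSfar : ∀ x ∈ S, ∀ᶠ A in atTop, ∃ l : StrongDual ℝ E,
      l.toExposed (adjoinFar S D e A) = {x} := fun x hx => by
    obtain ⟨l, hle, hlx⟩ := hSexp x hx
    filter_upwards [eventually_toExposed_adjoinFar ⟨x, hx⟩ hD hle] with A hA
    exact ⟨l, hA.trans hlx⟩
  filter_upwards [hS.eventually_all.2 hSfar] with A hA
  rw [extremePoints_convexHull_eq_self, ncard_adjoinFar hS hD]
  · rintro y hy
    obtain ⟨l, hle, hlt, -⟩ := hDexp y hy
    exact ⟨l, hle, hlt⟩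
  · rintro x (hx | ⟨y, hy, rfl⟩)
    · exact hA x hx
    · obtain ⟨l, hle, hlt, hly⟩ := hDexp y hy
      exact ⟨l, toExposed_adjoinFar_eq_singleton hle hlt hly A⟩

end AdjoinFar

section Faces

variable {N : ℕ} {V W : Set (EuclideanSpace ℝ (Fin N))}

lemma adim_convexHull_of_vectorSpan_eq_top (h : vectorSpan ℝ V = ⊤) :
    adim (convexHull ℝ V) = N := by
  rw [adim, ← direction_affineSpan, affineSpan_convexHull, direction_affineSpan, h, finrank_top,
    finrank_euclideanSpace_fin]

lemma card_le_totalFaces_add {ι : Type*} {T : Finset ι}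
    {l : ι → StrongDual ℝ (EuclideanSpace ℝ (Fin N))}
    (hV : V.Finite) (hW : W.Finite) (hVne : V.Nonempty) (hWne : W.Nonempty)
    (hl : InjOn (fun i => ((l i).toExposed V, (l i).toExposed W)) T) :
    T.card ≤ totalFaces (convexHull ℝ V + convexHull ℝ W) := by
  let face := fun i => (l i).toExposed (convexHull ℝ V + convexHull ℝ W)
  have hface : InjOn face T := fun i hi j hj hij => hl hi hj <| Prod.ext
    (toExposed_eq_of_toExposed_add_convexHull_eq hW hWne hij)
    (toExposed_eq_of_toExposed_add_convexHull_eq hV hVne (by simpa only [face, add_comm] using hij))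
  have hfin := finite_setOf_isExposed_convexHull (hV.add hW)
  rw [convexHull_add] at hfin
  rw [totalFaces, ← ncard_coe_finset T, ← hface.ncard_image]
  refine ncard_le_ncard ?_ hfin
  rintro _ ⟨i, -, rfl⟩
  refine ⟨ContinuousLinearMap.toExposed.isExposed, ?_⟩
  simp only [face, ← convexHull_add, toExposed_convexHull]
  exact (toExposed_nonempty_of_finite (hV.add hW) (hVne.add hWne) (l i)).convexHull

end Faces

section Curves

open Polynomial

lemma eq_C_of_natDegree_lt_card_of_eval_eq {R : Type*} [CommRing R] [IsDomain R] {q : R[X]}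
    {U : Finset R} {c : R} (hdeg : q.natDegree < U.card) (h : ∀ u ∈ U, q.eval u = c) : q = C c :=
  eq_of_natDegree_lt_card_of_eval_eq' q (C c) U (by simpa using h) (by simpa using hdeg)

/-- The point with parameter `s` on the parabola `s • u + s ^ 2 • v`. -/
def parabolaPoint {E : Type*} [AddCommGroup E] [Module ℝ E] (u v : E) (s : ℝ) : E :=
  s • u + s ^ 2 • v

lemma eq_zero_of_const_on_parabolaPoint {E : Type*} [AddCommGroup E] [Module ℝ E] {u v : E}
    {S : Finset ℝ} (hS : 2 < S.card) {f : E →ₗ[ℝ] ℝ} {c : ℝ}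
    (hf : ∀ s ∈ S, f (parabolaPoint u v s) = c) : f u = 0 ∧ f v = 0 ∧ c = 0 := by
  have hq : C (f v) * X ^ 2 + C (f u) * X + C 0 = C c := by
    refine eq_C_of_natDegree_lt_card_of_eval_eq (natDegree_quadratic_le.trans_lt hS) fun s hs => ?_
    rw [← hf s hs]
    simp only [parabolaPoint, eval_add, eval_mul, eval_C, eval_pow, eval_X, map_add, map_smul,
      smul_eq_mul]
    ring
  have hcoeff (n : ℕ) := congrArg (coeff · n) hq
  exact ⟨by simpa [coeff_X, coeff_C] using hcoeff 1, by simpa [coeff_X, coeff_C] using hcoeff 2,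
    by simpa using (hcoeff 0).symm⟩

lemma toExposed_image_parabolaPoint {E : Type*} [AddCommGroup E] [Module ℝ E] [TopologicalSpace E]
    {l : StrongDual ℝ E} {u v : E} {S : Set ℝ} {s₀ : ℝ} (hs₀ : s₀ ∈ S) (hu : l u = 2 * s₀)
    (hv : l v = -1) : l.toExposed (parabolaPoint u v '' S) = {parabolaPoint u v s₀} := by
  have hl (s : ℝ) : l (parabolaPoint u v s) = s₀ ^ 2 - (s - s₀) ^ 2 := by
    simp only [parabolaPoint, map_add, map_smul, smul_eq_mul, hu, hv]
    ring
  have hmax : {s ∈ S | l (parabolaPoint u v s) = l (parabolaPoint u v s₀)} = {s₀} := by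
    ext s
    simp +contextual [hl, sub_eq_zero, hs₀]
  rw [toExposed_image_of_forall_le hs₀, hmax, image_singleton]
  intro s _
  rw [hl, hl, sub_self]
  linarith [sq_nonneg (s - s₀)]

variable {N : ℕ}

/-- The point `(s, 0, …, 0, s ^ 2)`. -/
noncomputable def planarPoint (N : ℕ) (s : ℝ) : EuclideanSpace ℝ (Fin (N + 1)) :=
  parabolaPoint (EuclideanSpace.single 0 1) (EuclideanSpace.single (Fin.last N) 1) s

lemma planarPoint_injective (hN : N ≠ 0) : Function.Injective (planarPoint N) := fun s t hst => by
  have h0 : (0 : Fin (N + 1)) ≠ Fin.last N := Ne.symm (Fin.last_eq_zero_iff.not.2 hN)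
  simpa [planarPoint, parabolaPoint, h0] using congrArg (· 0) hst

/-- The point `(1, u, …, u ^ N)` of the moment curve in the hyperplane `x₀ = 1`. -/
noncomputable def momentPoint (N : ℕ) (u : ℝ) : EuclideanSpace ℝ (Fin (N + 1)) :=
  WithLp.toLp 2 fun i => u ^ (i : ℕ)

/-- The functional whose coordinates are the first `N + 1` coefficients of `q`. On the moment curve
it is evaluation of `q`, provided that `q` has degree at most `N`. -/
noncomputable def coeffFunctional (N : ℕ) (q : ℝ[X]) :
    StrongDual ℝ (EuclideanSpace ℝ (Fin (N + 1))) :=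
  innerSL ℝ (WithLp.toLp 2 fun i => q.coeff i)

lemma coeffFunctional_apply (q : ℝ[X]) (x : EuclideanSpace ℝ (Fin (N + 1))) :
    coeffFunctional N q x = ∑ i : Fin (N + 1), q.coeff i * x i := by
  simp [coeffFunctional, PiLp.inner_apply, mul_comm]

lemma coeffFunctional_single (q : ℝ[X]) (i : Fin (N + 1)) :
    coeffFunctional N q (EuclideanSpace.single i 1) = q.coeff i := by
  simp [coeffFunctional_apply]

lemma coeffFunctional_momentPoint {q : ℝ[X]} (hq : q.natDegree ≤ N) (u : ℝ) :
    coeffFunctional N q (momentPoint N u) = q.eval u := by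
  rw [coeffFunctional_apply, eval_eq_sum_range' (Nat.lt_succ_of_le hq), ← Fin.sum_univ_eq_sum_range
    (fun i => q.coeff i * u ^ i)]
  rfl

lemma momentPoint_injective (hN : N ≠ 0) : Function.Injective (momentPoint N) := fun u v huv => by
  have hX : (X : ℝ[X]).natDegree ≤ N := natDegree_X_le.trans (Nat.one_le_iff_ne_zero.2 hN)
  simpa only [coeffFunctional_momentPoint hX, eval_X] using congrArg (coeffFunctional N X) huv

lemma exists_eq_coeffFunctional (f : EuclideanSpace ℝ (Fin (N + 1)) →ₗ[ℝ] ℝ) :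
    ∃ q : ℝ[X], q.natDegree ≤ N ∧ f = coeffFunctional N q := by
  refine ⟨∑ i : Fin (N + 1), monomial i (f (EuclideanSpace.single i 1)), ?_, ?_⟩
  · exact natDegree_sum_le_of_forall_le _ _ fun i _ =>
      (natDegree_monomial_le _).trans (Nat.le_of_lt_succ i.2)
  · refine (EuclideanSpace.basisFun (Fin (N + 1)) ℝ).toBasis.ext fun i => ?_
    simp [coeffFunctional_single, coeff_monomial, Fin.val_inj]

lemma toExposed_image_momentPoint {q : ℝ[X]} (hq : q.natDegree ≤ N) {U : Set ℝ} {u₀ : ℝ}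
    (hu₀ : u₀ ∈ U) (hmax : ∀ u ∈ U, q.eval u ≤ q.eval u₀) :
    (coeffFunctional N q).toExposed (momentPoint N '' U) =
      momentPoint N '' {u ∈ U | q.eval u = q.eval u₀} := by
  simp only [← coeffFunctional_momentPoint hq] at hmax ⊢
  exact toExposed_image_of_forall_le hu₀ hmax

/-- The polynomial `c - r ^ 2`, which is maximal exactly at the roots of `r`, with `c` chosen to
make the constant coefficient `2 * s`: its functional then selects the parameter `s` on the parabola
spanned by the first and the last basis vector. -/
noncomputable def touchingPoly (r : ℝ[X]) (s : ℝ) : ℝ[X] :=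
  C (2 * s + r.eval 0 ^ 2) - r ^ 2

variable {k : ℕ} {r : ℝ[X]}

lemma coeff_zero_touchingPoly (r : ℝ[X]) (s : ℝ) : (touchingPoly r s).coeff 0 = 2 * s := by
  simp [touchingPoly, coeff_zero_eq_eval_zero]

lemma natDegree_touchingPoly_le (hr : r.natDegree = k) (s : ℝ) :
    (touchingPoly r s).natDegree ≤ 2 * k := by
  refine (natDegree_sub_le _ _).trans (max_le (by rw [natDegree_C]; exact Nat.zero_le _) ?_)
  rw [← hr]
  exact natDegree_pow_le

lemma coeff_two_mul_touchingPoly (hr : r.Monic) (hdeg : r.natDegree = k) (hk : k ≠ 0) (s : ℝ) :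
    (touchingPoly r s).coeff (2 * k) = -1 := by
  have hlead : (r ^ 2).coeff (2 * k) = 1 := by
    rw [← hdeg, ← natDegree_pow]
    exact (hr.pow 2).coeff_natDegree
  rw [touchingPoly, coeff_sub, coeff_C_of_ne_zero (by omega), hlead, zero_sub]

lemma toExposed_touchingPoly_momentPoint (hr : r.natDegree = k) (s : ℝ) {U : Set ℝ}
    (hU : ∃ u ∈ U, r.IsRoot u) :
    (coeffFunctional (2 * k) (touchingPoly r s)).toExposed (momentPoint (2 * k) '' U) =
      momentPoint (2 * k) '' {u ∈ U | r.IsRoot u} := by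
  obtain ⟨u₀, hu₀, hroot⟩ := hU
  have heval (u : ℝ) :
      (touchingPoly r s).eval u = (touchingPoly r s).eval u₀ - r.eval u ^ 2 := by
    simp [touchingPoly, hroot.eq_zero]
  have hmax (u : ℝ) : (touchingPoly r s).eval u = (touchingPoly r s).eval u₀ ↔ r.IsRoot u := by
    rw [heval u, sub_eq_self, sq_eq_zero_iff, IsRoot]
  rw [toExposed_image_momentPoint (natDegree_touchingPoly_le hr s) hu₀]
  · simp only [hmax]
  · intro u _
    rw [heval u]
    exact sub_le_self _ (sq_nonneg _)

lemma toExposed_touchingPoly_planarPoint (hr : r.Monic) (hdeg : r.natDegree = k) (hk : k ≠ 0)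
    {S : Set ℝ} {s : ℝ} (hs : s ∈ S) :
    (coeffFunctional (2 * k) (touchingPoly r s)).toExposed (planarPoint (2 * k) '' S) =
      {planarPoint (2 * k) s} := by
  apply toExposed_image_parabolaPoint hs
  · simp [coeffFunctional_single, coeff_zero_touchingPoly]
  · simp [coeffFunctional_single, coeff_two_mul_touchingPoly hr hdeg hk]

end Curves

section Polytopes

open Filter Polynomial

variable {N : ℕ}

/-- The vertices of the polytope `𝒫`: planar points with parameters in `S`, and the basis vectors
orthogonal to their plane, pushed far out in the last coordinate. -/
noncomputable def parabolaVertices (N : ℕ) (S : Set ℝ) (A : ℝ) :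
    Set (EuclideanSpace ℝ (Fin (N + 1))) :=
  adjoinFar (planarPoint N '' S) ((EuclideanSpace.single · 1) '' {0, Fin.last N}ᶜ)
    (EuclideanSpace.single (Fin.last N) 1) A

/-- The vertices of the polytope `𝒬`, a pyramid over a cyclic polytope: the points of the moment
curve with parameters in `U`, and an apex far out on the last axis. -/
noncomputable def cyclicPyramidVertices (N : ℕ) (U : Set ℝ) (A : ℝ) :
    Set (EuclideanSpace ℝ (Fin (N + 1))) :=
  adjoinFar (momentPoint N '' U) {0} (EuclideanSpace.single (Fin.last N) 1) A

lemma finite_parabolaVertices {S : Set ℝ} (hS : S.Finite) (A : ℝ) :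
    (parabolaVertices N S A).Finite :=
  finite_adjoinFar (hS.image _) (toFinite _) _ A

lemma finite_cyclicPyramidVertices {U : Set ℝ} (hU : U.Finite) (A : ℝ) :
    (cyclicPyramidVertices N U A).Finite :=
  finite_adjoinFar (hU.image _) (toFinite _) _ A

lemma adim_parabolaVertices {S : Finset ℝ} (hS : 2 < S.card) (A : ℝ) :
    adim (convexHull ℝ (parabolaVertices N S A)) = N + 1 := by
  have hplanar : ∀ f : EuclideanSpace ℝ (Fin (N + 1)) →ₗ[ℝ] ℝ, ∀ c,
      (∀ x ∈ planarPoint N '' S, f x = c) → f (EuclideanSpace.single 0 1) = 0 ∧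
        f (EuclideanSpace.single (Fin.last N) 1) = 0 ∧ c = 0 := fun f c hf =>
    eq_zero_of_const_on_parabolaPoint hS fun s hs => hf _ (mem_image_of_mem _ hs)
  obtain ⟨s₀, hs₀⟩ : S.Nonempty := Finset.card_pos.1 (by omega)
  have hmem : planarPoint N s₀ ∈ planarPoint N '' S := mem_image_of_mem _ hs₀
  apply adim_convexHull_of_vectorSpan_eq_top
  refine vectorSpan_adjoinFar_eq_top A (fun f hf => ?_) fun f hf => ?_
  · exact (hplanar f _ fun x hx => hf x hx _ hmem).2.1
  · obtain ⟨hf0, hflast, hc⟩ := hplanar f _ fun x hx => hf x (.inl hx) _ (.inl hmem)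
    refine (EuclideanSpace.basisFun (Fin (N + 1)) ℝ).toBasis.ext fun i => ?_
    suffices f (EuclideanSpace.single i 1) = 0 by simpa
    by_cases hi : i ∈ ({0, Fin.last N} : Set (Fin (N + 1)))
    · rcases hi with rfl | rfl
      exacts [hf0, hflast]
    · exact (hf _ (.inr (mem_image_of_mem _ hi)) _ (.inl hmem)).trans hc

lemma adim_cyclicPyramidVertices (hN : N ≠ 0) {U : Finset ℝ} (hU : N < U.card) (A : ℝ) :
    adim (convexHull ℝ (cyclicPyramidVertices N U A)) = N + 1 := by
  have hmoment : ∀ q : ℝ[X], q.natDegree ≤ N → ∀ c,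
      (∀ x ∈ momentPoint N '' U, coeffFunctional N q x = c) → q = C c := fun q hq c hc =>
    eq_C_of_natDegree_lt_card_of_eval_eq (hq.trans_lt hU) fun u hu => by
      rw [← coeffFunctional_momentPoint hq, hc _ (mem_image_of_mem _ hu)]
  obtain ⟨u₀, hu₀⟩ : U.Nonempty := Finset.card_pos.1 (by omega)
  have hmem : momentPoint N u₀ ∈ momentPoint N '' U := mem_image_of_mem _ hu₀
  apply adim_convexHull_of_vectorSpan_eq_top
  refine vectorSpan_adjoinFar_eq_top A (fun f hf => ?_) fun f hf => ?_
  · obtain ⟨q, hq, rfl⟩ := exists_eq_coeffFunctional f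
    have hqC := hmoment q hq _ fun x hx => hf x hx _ hmem
    rw [ContinuousLinearMap.coe_coe, coeffFunctional_single, hqC, Fin.val_last,
      coeff_C_of_ne_zero hN]
  · obtain ⟨q, hq, rfl⟩ := exists_eq_coeffFunctional f
    have hqC := hmoment q hq 0 fun x hx => by simpa using hf x (.inl hx) 0 (.inr rfl)
    ext x
    simp [hqC, coeffFunctional_apply]

lemma ncard_image_single_compl (hN : N ≠ 0) :
    ((EuclideanSpace.single · (1 : ℝ)) '' ({0, Fin.last N}ᶜ : Set (Fin (N + 1)))).ncard =
      N - 1 := by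
  have h0 : (0 : Fin (N + 1)) ≠ Fin.last N := Ne.symm (Fin.last_eq_zero_iff.not.2 hN)
  have hbasis : ⇑(EuclideanSpace.basisFun (Fin (N + 1)) ℝ).toBasis =
      (EuclideanSpace.single · 1) := by
    ext1 i
    simp
  have hinj := (EuclideanSpace.basisFun (Fin (N + 1)) ℝ).toBasis.injective
  rw [hbasis] at hinj
  rw [ncard_image_of_injective _ hinj, ncard_compl, ncard_pair h0, Nat.card_fin]
  rfl

lemma eventually_ncard_extremePoints_parabolaVertices (hN : N ≠ 0) (S : Finset ℝ) :
    ∀ᶠ A in atTop, ((convexHull ℝ (parabolaVertices N S A)).extremePoints ℝ).ncard =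
      S.card + (N - 1) := by
  rw [← ncard_image_single_compl hN, ← ncard_coe_finset S,
    ← ncard_image_of_injective _ (planarPoint_injective hN)]
  refine eventually_ncard_extremePoints_adjoinFar (S.finite_toSet.image _) (toFinite _) ?_ ?_
  · rintro _ ⟨s, hs, rfl⟩
    let l := coeffFunctional N (C (2 * s) - X ^ N)
    have hl0 : l (EuclideanSpace.single 0 1) = 2 * s := by
      simp [l, coeffFunctional_single, coeff_X_pow, hN.symm]
    have hllast : l (EuclideanSpace.single (Fin.last N) 1) = -1 := by
      simp [l, coeffFunctional_single, coeff_C_of_ne_zero hN]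
    exact ⟨l, hllast.trans_lt (by norm_num), toExposed_image_parabolaPoint hs hl0 hllast⟩
  · rintro _ ⟨j, hj, rfl⟩
    obtain ⟨hj0, hjlast⟩ : j ≠ 0 ∧ j ≠ Fin.last N := by simpa using hj
    let l := coeffFunctional N (X ^ (j : ℕ))
    have hl (i : Fin (N + 1)) : l (EuclideanSpace.single i 1) = if i = j then 1 else 0 := by
      simp [l, coeffFunctional_single, coeff_X_pow, Fin.val_inj]
    refine ⟨l, by simp [hl, hjlast.symm], forall_mem_image.2 fun s _ => ?_, ?_⟩
    · simp [planarPoint, parabolaPoint, hl, hj0.symm, hjlast.symm]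
    · have hmax : {i ∈ ({0, Fin.last N}ᶜ : Set (Fin (N + 1))) |
          l (EuclideanSpace.single i 1) = l (EuclideanSpace.single j 1)} = {j} := by
        ext i
        by_cases hij : i = j <;> simp [hl, hij, hj0, hjlast]
      rw [toExposed_image_of_forall_le hj, hmax, image_singleton]
      intro i _
      rw [hl, hl, if_pos rfl]
      split_ifs <;> norm_num

variable {k : ℕ}

lemma eventually_ncard_extremePoints_cyclicPyramidVertices (hk : k ≠ 0) (U : Finset ℝ) :
    ∀ᶠ A in atTop, ((convexHull ℝ (cyclicPyramidVertices (2 * k) U A)).extremePoints ℝ).ncard =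
      U.card + 1 := by
  have hcard : U.card + 1 = (momentPoint (2 * k) '' U).ncard +
      ({0} : Set (EuclideanSpace ℝ (Fin (2 * k + 1)))).ncard := by
    rw [ncard_image_of_injective _ (momentPoint_injective (by omega)), ncard_coe_finset,
      ncard_singleton]
  rw [hcard]
  refine eventually_ncard_extremePoints_adjoinFar (U.finite_toSet.image _) (toFinite _) ?_ ?_
  · rintro _ ⟨u, hu, rfl⟩
    have hmonic : ((X - C u) ^ k).Monic := (monic_X_sub_C u).pow k
    have hdeg : ((X - C u) ^ k).natDegree = k := by
      rw [(monic_X_sub_C u).natDegree_pow, natDegree_X_sub_C, mul_one]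
    have hroot (v : ℝ) : ((X - C u) ^ k).IsRoot v ↔ v = u := by
      simp [hk, sub_eq_zero]
    refine ⟨coeffFunctional (2 * k) (touchingPoly ((X - C u) ^ k) 0), ?_, ?_⟩
    · simp [coeffFunctional_single, coeff_two_mul_touchingPoly hmonic hdeg hk]
    · rw [toExposed_touchingPoly_momentPoint hdeg 0 ⟨u, hu, (hroot u).2 rfl⟩]
      have hroots : {v ∈ (U : Set ℝ) | ((X - C u) ^ k).IsRoot v} = {u} := by
        ext v
        simp +contextual only [hroot, mem_ofPred_eq, mem_singleton_iff, and_iff_right_iff_imp, hu,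
          implies_true]
      rw [hroots, image_singleton]
  · rintro _ rfl
    refine ⟨coeffFunctional (2 * k) (-1), ?_, forall_mem_image.2 fun u _ => ?_, ?_⟩
    · simp [coeffFunctional_single, coeff_one, hk]
    · simp [coeffFunctional_momentPoint]
    · simp +contextual [ContinuousLinearMap.toExposed, Set.ext_iff]

/-- The functional indexed by `(s, G)`, which is maximal on the points of `𝒫` at the parameter `s`
and on the points of `𝒬` at the parameters in `G`. -/
noncomputable def touchingFunctional (k : ℕ) (p : ℝ × Finset ℝ) :
    StrongDual ℝ (EuclideanSpace ℝ (Fin (2 * k + 1))) :=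
  coeffFunctional (2 * k) (touchingPoly (Lagrange.nodal p.2 id) p.1)

variable {S U : Set ℝ} {p : ℝ × Finset ℝ}

lemma touchingFunctional_single_last (hk : k ≠ 0) (hp : p.2.card = k) :
    touchingFunctional k p (EuclideanSpace.single (Fin.last (2 * k)) 1) = -1 := by
  simp [touchingFunctional, coeffFunctional_single,
    coeff_two_mul_touchingPoly Lagrange.nodal_monic (Lagrange.natDegree_nodal.trans hp) hk]

lemma eventually_toExposed_touchingFunctional_parabolaVertices (hk : k ≠ 0) (hp : p.2.card = k)
    (hs : p.1 ∈ S) : ∀ᶠ A in atTop, (touchingFunctional k p).toExposed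
      (parabolaVertices (2 * k) S A) = {planarPoint (2 * k) p.1} := by
  have hneg : touchingFunctional k p (EuclideanSpace.single (Fin.last (2 * k)) 1) < 0 := by
    simp [touchingFunctional_single_last hk hp]
  rw [← toExposed_touchingPoly_planarPoint Lagrange.nodal_monic
    (Lagrange.natDegree_nodal.trans hp) hk hs]
  exact eventually_toExposed_adjoinFar ⟨_, mem_image_of_mem _ hs⟩ (toFinite _) hneg

lemma eventually_toExposed_touchingFunctional_cyclicPyramidVertices (hk : k ≠ 0)
    (hp : p.2.card = k) (hG : (p.2 : Set ℝ) ⊆ U) :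
    ∀ᶠ A in atTop, (touchingFunctional k p).toExposed (cyclicPyramidVertices (2 * k) U A) =
      momentPoint (2 * k) '' p.2 := by
  have hroot (u : ℝ) : (Lagrange.nodal p.2 id).IsRoot u ↔ u ∈ p.2 := by
    simp [Lagrange.eval_nodal, Finset.prod_eq_zero_iff, sub_eq_zero]
  have hroots : {u ∈ U | (Lagrange.nodal p.2 id).IsRoot u} = p.2 := by
    ext u
    simpa only [hroot, mem_ofPred_eq, Finset.mem_coe, and_iff_right_iff_imp] using @hG u
  obtain ⟨u, hu⟩ : p.2.Nonempty := Finset.card_ne_zero.1 (hp ▸ hk)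
  have hneg : touchingFunctional k p (EuclideanSpace.single (Fin.last (2 * k)) 1) < 0 := by
    simp [touchingFunctional_single_last hk hp]
  rw [← hroots, ← toExposed_touchingPoly_momentPoint (Lagrange.natDegree_nodal.trans hp) p.1
    ⟨u, hG hu, (hroot u).2 hu⟩]
  exact eventually_toExposed_adjoinFar ⟨_, mem_image_of_mem _ (hG hu)⟩ (toFinite _) hneg

lemma eventually_card_mul_choose_le_totalFaces (hk : k ≠ 0) {S U : Finset ℝ} (hS : S.Nonempty)
    (hU : U.Nonempty) : ∀ᶠ A in atTop, S.card * U.card.choose k ≤ totalFaces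
      (convexHull ℝ (parabolaVertices (2 * k) S A) +
        convexHull ℝ (cyclicPyramidVertices (2 * k) U A)) := by
  let T := S ×ˢ U.powersetCard k
  have hexposed : ∀ p ∈ T, ∀ᶠ A in atTop,
      (touchingFunctional k p).toExposed (parabolaVertices (2 * k) S A) =
          {planarPoint (2 * k) p.1} ∧
        (touchingFunctional k p).toExposed (cyclicPyramidVertices (2 * k) U A) =
          momentPoint (2 * k) '' p.2 := fun p hp => by
    obtain ⟨hs, hGU, hG⟩ : p.1 ∈ S ∧ p.2 ⊆ U ∧ p.2.card = k := by simpa [T] using hp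
    exact (eventually_toExposed_touchingFunctional_parabolaVertices hk hG hs).and
      (eventually_toExposed_touchingFunctional_cyclicPyramidVertices hk hG (by simpa using hGU))
  filter_upwards [T.eventually_all.2 hexposed] with A hA
  rw [← Finset.card_powersetCard, ← Finset.card_product]
  refine card_le_totalFaces_add (l := touchingFunctional k)
    (finite_parabolaVertices S.finite_toSet A) (finite_cyclicPyramidVertices U.finite_toSet A)
    ((hS.to_set.image _).inl) ((hU.to_set.image _).inl) fun p hp q hq hpq => ?_
  obtain ⟨hpP, hpQ⟩ := hA p hp
  obtain ⟨hqP, hqQ⟩ := hA q hq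
  simp only [hpP, hpQ, hqP, hqQ, Prod.mk.injEq] at hpq
  refine Prod.ext (planarPoint_injective (by omega) (singleton_injective hpq.1)) ?_
  exact_mod_cast (momentPoint_injective (by omega)).image_injective hpq.2

lemma exists_polytopes_card_mul_choose_le_totalFaces (hk : k ≠ 0) {a b : ℕ} (ha : 2 < a)
    (hb : 2 * k < b) :
    ∃ V W : Set (EuclideanSpace ℝ (Fin (2 * k + 1))), V.Finite ∧ W.Finite ∧
      adim (convexHull ℝ V) = 2 * k + 1 ∧ adim (convexHull ℝ W) = 2 * k + 1 ∧
      ((convexHull ℝ V).extremePoints ℝ).ncard = a + (2 * k - 1) ∧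
      ((convexHull ℝ W).extremePoints ℝ).ncard = b + 1 ∧
      a * b.choose k ≤ totalFaces (convexHull ℝ V + convexHull ℝ W) := by
  obtain ⟨S, rfl⟩ := Infinite.exists_subset_card_eq ℝ a
  obtain ⟨U, rfl⟩ := Infinite.exists_subset_card_eq ℝ b
  have hS : S.Nonempty := Finset.card_pos.1 (by omega)
  have hU : U.Nonempty := Finset.card_pos.1 (by omega)
  obtain ⟨A, hSU, hextS, hextU⟩ := ((eventually_card_mul_choose_le_totalFaces hk hS hU).and
    ((eventually_ncard_extremePoints_parabolaVertices (N := 2 * k) (by omega) S).and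
      (eventually_ncard_extremePoints_cyclicPyramidVertices hk U))).exists
  exact ⟨_, _, finite_parabolaVertices S.finite_toSet A,
    finite_cyclicPyramidVertices U.finite_toSet A, adim_parabolaVertices ha A,
    adim_cyclicPyramidVertices (by omega) hb A, hextS, hextU, hSU⟩

end Polytopes

section Counting

lemma mul_pow_le_mul_pow {R : Type*} [CommSemiring R] [PartialOrder R] [IsOrderedRing R] {x y : R}
    (hx : 0 ≤ x) (hxy : x ≤ y) {k : ℕ} (hk : k ≠ 0) : y * x ^ k ≤ x * y ^ k := by
  obtain ⟨j, rfl⟩ := Nat.exists_eq_succ_of_ne_zero hk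
  have hy := hx.trans hxy
  calc y * x ^ (j + 1) = x * y * x ^ j := by ring
    _ ≤ x * y * y ^ j := by gcongr
    _ = x * y ^ (j + 1) := by ring

lemma half_pow_div_factorial_le_choose {k m : ℕ} (hm : 2 * k ≤ m) :
    ((m : ℝ) / 2) ^ k / k.factorial ≤ (m - 1).choose k := by
  refine le_trans ?_ (Nat.pow_le_choose (α := ℝ) k (m - 1))
  have hle : m ≤ 2 * (m - 1 + 1 - k) := by omega
  have hcast : (m : ℝ) ≤ 2 * (m - 1 + 1 - k : ℕ) := by exact_mod_cast hle
  gcongr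
  linarith

/-- The constant `c` of the lower bound in dimension `2 * k + 1`. -/
noncomputable def faceConst (k : ℕ) : ℝ :=
  1 / (4 * 2 ^ k * k.factorial)

lemma faceConst_pos (k : ℕ) : 0 < faceConst k := by
  unfold faceConst
  positivity

lemma faceConst_mul_le_mul_choose {k n m : ℕ} (hk : k ≠ 0) (hn : 4 * k + 2 ≤ n) (hnm : n ≤ m) :
    faceConst k * (n * (m : ℝ) ^ k + m * (n : ℝ) ^ k) ≤
      ((n - (2 * k - 1)) * (m - 1).choose k : ℕ) := by
  have hdom : (m : ℝ) * n ^ k ≤ n * m ^ k :=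
    mul_pow_le_mul_pow n.cast_nonneg (Nat.cast_le.2 hnm) hk
  have hhalf : (n : ℝ) / 2 ≤ (n - (2 * k - 1) : ℕ) := by
    have hle : n ≤ (n - (2 * k - 1)) * 2 := by omega
    rw [div_le_iff₀ two_pos]
    exact_mod_cast hle
  calc faceConst k * (n * (m : ℝ) ^ k + m * (n : ℝ) ^ k)
      ≤ faceConst k * (n * (m : ℝ) ^ k + n * (m : ℝ) ^ k) := by
        have hc := faceConst_pos k
        gcongr
    _ = n / 2 * ((m / 2) ^ k / k.factorial) := by
        rw [faceConst, div_pow]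
        field_simp
        ring
    _ ≤ (n - (2 * k - 1) : ℕ) * (m - 1).choose k := by
        gcongr
        exact half_pow_div_factorial_le_choose (by omega)
    _ = ((n - (2 * k - 1)) * (m - 1).choose k : ℕ) := by rw [Nat.cast_mul]

end Counting

lemma exists_polytopes_faceConst_mul_le_totalFaces {k n m : ℕ} (hk : k ≠ 0) (hn : 4 * k + 2 ≤ n)
    (hnm : n ≤ m) :
    ∃ V W : Set (EuclideanSpace ℝ (Fin (2 * k + 1))), V.Finite ∧ W.Finite ∧
      adim (convexHull ℝ V) = 2 * k + 1 ∧ adim (convexHull ℝ W) = 2 * k + 1 ∧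
      ((convexHull ℝ V).extremePoints ℝ).ncard = n ∧
      ((convexHull ℝ W).extremePoints ℝ).ncard = m ∧
      faceConst k * (n * (m : ℝ) ^ k + m * (n : ℝ) ^ k) ≤
        totalFaces (convexHull ℝ V + convexHull ℝ W) := by
  obtain ⟨V, W, hV, hW, hdimV, hdimW, hextV, hextW, hfaces⟩ :=
    exists_polytopes_card_mul_choose_le_totalFaces hk (a := n - (2 * k - 1)) (b := m - 1)
      (by omega) (by omega)
  exact ⟨V, W, hV, hW, hdimV, hdimW, by omega, by omega,
    (faceConst_mul_le_mul_choose hk hn hnm).trans (Nat.cast_le.2 hfaces)⟩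

theorem stmt13 (d : ℕ) (hd : 3 ≤ d) (hodd : Odd d) :
    ∃ c : ℝ, 0 < c ∧ ∃ n₀ : ℕ,
      ∀ n m : ℕ, n₀ ≤ n → n₀ ≤ m →
        ∃ V W : Set (EuclideanSpace ℝ (Fin d)),
          V.Finite ∧ W.Finite ∧
          adim (convexHull ℝ V) = d ∧ adim (convexHull ℝ W) = d ∧
          ((convexHull ℝ V).extremePoints ℝ).ncard = n ∧
          ((convexHull ℝ W).extremePoints ℝ).ncard = m ∧
          c * ((n : ℝ) * (m : ℝ) ^ (d / 2) + (m : ℝ) * (n : ℝ) ^ (d / 2)) ≤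
            (totalFaces (convexHull ℝ V + convexHull ℝ W) : ℝ) := by
  obtain ⟨k, rfl⟩ := hodd
  have hk : k ≠ 0 := by omega
  have hhalf : (2 * k + 1) / 2 = k := by omega
  rw [hhalf]
  refine ⟨faceConst k, faceConst_pos k, 4 * k + 2, fun n m hn hm => ?_⟩
  rcases le_total n m with hnm | hmn
  · exact exists_polytopes_faceConst_mul_le_totalFaces hk hn hnm
  · obtain ⟨W, V, hW, hV, hdimW, hdimV, hextW, hextV, hfaces⟩ :=
      exists_polytopes_faceConst_mul_le_totalFaces hk hm hmn
    rw [add_comm, add_comm (convexHull ℝ W)] at hfaces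
    exact ⟨V, W, hV, hW, hdimV, hdimW, hextV, hextW, hfaces⟩
end
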